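/- With Λ' as above, assume ⟨d₁,d₁⟩ is even. Then for every root δ ∈ Λ' (⟨δ,δ⟩ = −2) and every ω ∈ Ω_K one has ⟨ω, δ_K⟩ ≠ 0, where the pairing of ω ∈ ℂ⁴ with δ_K ∈ ℚ⁴ is via the ℂ-bilinear extension of the form of K. (The discriminant locus does not meet the period domain of the even-type involution.) -/

import Mathlib

/-!
STATEMENT 8: With `Λ'` as in the context and `⟨d₁,d₁⟩` even, for every root
`δ ∈ Λ'` and every `ω ∈ Ω_K` one has `⟨ω, δ_K⟩ ≠ 0`.
-/

noncomputable section
namespace Stmt8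

/-- The bilinear form of K = U(2) ⊕ U(2) on ℚ⁴ (ℚ-bilinear extension):
Gram matrix has blocks [[0,2],[2,0]] and [[0,2],[2,0]]. -/
def bK (x y : Fin 4 → ℚ) : ℚ :=
  2 * (x 0 * y 1 + x 1 * y 0) + 2 * (x 2 * y 3 + x 3 * y 2)

/-- The bilinear form of E = E8(2) on ℚ⁸ (ℚ-bilinear extension):
Gram matrix is −2 times the E8 Cartan matrix. -/
def bE (x y : Fin 8 → ℚ) : ℚ :=
  ∑ i : Fin 8, ∑ j : Fin 8, x i * ((-2 * CartanMatrix.E₈ i j : ℤ) : ℚ) * y j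

/-- `x` lies in the lattice ℤ⁴ ⊂ ℚ⁴. -/
def isInt4 (x : Fin 4 → ℚ) : Prop := ∀ i, ∃ n : ℤ, x i = n

/-- `x` lies in the lattice ℤ⁸ ⊂ ℚ⁸. -/
def isInt8 (x : Fin 8 → ℚ) : Prop := ∀ i, ∃ n : ℤ, x i = n

/-- `x` lies in the dual lattice (1/2)ℤ⁴ ⊂ ℚ⁴ of K. -/
def isHalf4 (x : Fin 4 → ℚ) : Prop := ∀ i, ∃ n : ℤ, x i = n / 2

/-- `x` lies in the dual lattice (1/2)ℤ⁸ ⊂ ℚ⁸ of E. -/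
def isHalf8 (x : Fin 8 → ℚ) : Prop := ∀ i, ∃ n : ℤ, x i = n / 2

/-- The ambient space ℚ⁴ ⊕ ℚ⁸ of K ⊕ E. -/
abbrev V : Type := (Fin 4 → ℚ) × (Fin 8 → ℚ)

/-- The orthogonal direct sum form of K ⊕ E on ℚ⁴ ⊕ ℚ⁸. -/
def bV (x y : V) : ℚ := bK x.1 y.1 + bE x.2 y.2

/-- Membership in the lattice Λ' = ℤ·(d₁,d₂) + (ℤ⁴ ⊕ ℤ⁸) ⊂ ℚ⁴ ⊕ ℚ⁸. -/
def memL (d₁ : Fin 4 → ℚ) (d₂ : Fin 8 → ℚ) (x : V) : Prop :=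
  ∃ n : ℤ, isInt4 (x.1 - (n : ℚ) • d₁) ∧ isInt8 (x.2 - (n : ℚ) • d₂)

/-- The ℂ-bilinear extension of the form of K to ℂ⁴. -/
def bKC (x y : Fin 4 → ℂ) : ℂ :=
  2 * (x 0 * y 1 + x 1 * y 0) + 2 * (x 2 * y 3 + x 3 * y 2)

/-- The period domain Ω_K: ω ∈ ℂ⁴ with ⟨ω,ω⟩ = 0 and ⟨ω,ω̄⟩ a positive real. -/
def OmegaK (ω : Fin 4 → ℂ) : Prop :=
  bKC ω ω = 0 ∧ ∃ t : ℝ, 0 < t ∧ bKC ω (fun i => (starRingEnd ℂ) (ω i)) = (t : ℂ)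

/-- Coercion ℚ⁴ → ℂ⁴. -/
def qc (x : Fin 4 → ℚ) : Fin 4 → ℂ := fun i => ((x i : ℚ) : ℂ)

/-!
A root of `Λ'` does not lie in `K ⊕ E`, whose norms are divisible by `4`, so its components lie in
the nontrivial cosets of `d₁` and `d₂`. Since `⟨d₁,d₁⟩` is even, the parallelogram law makes
`⟨δ_K,δ_K⟩` even, and it exceeds `-2` because `δ_E` is a nonzero vector of a negative definite
lattice. Hence `⟨δ_K,δ_K⟩ ≥ 0`. On the other hand `K` has only two positive directions and a period
`ω` spans a positive definite real plane, so every nonzero real vector orthogonal to `ω` has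
negative norm.
-/

section SignOfQuadraticForms

variable {𝕜 M : Type*} [Field 𝕜] [LinearOrder 𝕜] [AddCommGroup M] [Module 𝕜 M]
  {Q : QuadraticForm 𝕜 M}

theorem posDef_of_eq_sum_sq [IsStrictOrderedRing 𝕜] {ι : Type*} [Fintype ι] {c : ι → 𝕜}
    (hc : ∀ i, 0 < c i) {u : M → ι → 𝕜} (hu : ∀ x, u x = 0 → x = 0)
    (hQ : ∀ x, Q x = ∑ i, c i * u x i ^ 2) : Q.PosDef := by
  intro x hx
  obtain ⟨i, hi⟩ : ∃ i, u x i ≠ 0 := Function.ne_iff.1 (mt (hu x) hx)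
  rw [hQ]
  exact Finset.sum_pos' (fun j _ ↦ mul_nonneg (hc j).le (sq_nonneg _))
    ⟨i, Finset.mem_univ i, mul_pos (hc i) (sq_pos_of_ne_zero hi)⟩

section PullBack

variable {W : Type*} [AddCommGroup W] [Module 𝕜 W] {f : W →ₗ[𝕜] M}

theorem posDef_restrict_range_of_posDef_comp (hf : (Q.comp f).PosDef) :
    (Q.restrict (LinearMap.range f)).PosDef := by
  rintro ⟨_, w, rfl⟩ hw
  exact hf w fun h ↦ hw (by simp [h])

theorem finrank_range_of_posDef_comp (hf : (Q.comp f).PosDef) :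
    Module.finrank 𝕜 (LinearMap.range f) = Module.finrank 𝕜 W := by
  refine LinearMap.finrank_range_of_inj ((injective_iff_map_eq_zero f).2 fun w hw ↦ ?_)
  exact hf.anisotropic w (by simp [hw])

end PullBack

theorem neg_of_isOrtho_of_posDef [IsStrictOrderedRing 𝕜] [FiniteDimensional 𝕜 M]
    {W : Submodule 𝕜 M} (hW : (Q.restrict W).PosDef)
    (hdim : Module.finrank 𝕜 M ≤ sigNeg Q + Module.finrank 𝕜 W)
    {x : M} (hx : ∀ w ∈ W, Q.IsOrtho w x) (hx0 : x ≠ 0) : Q x < 0 := by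
  by_contra! hQx
  have hxW : x ∉ W := fun hxW ↦ by
    have hdouble : Q (x + x) = Q x + Q x := hx x hxW
    have hpos : 0 < Q x := hW ⟨x, hxW⟩ (by simpa using hx0)
    rw [← two_smul 𝕜 x, QuadraticMap.map_smul, smul_eq_mul] at hdouble
    linarith
  have hnonpos : ∀ v ∈ W ⊔ 𝕜 ∙ x, (-Q) v ≤ 0 := by
    intro v hv
    obtain ⟨w, hw, _, hy, rfl⟩ := Submodule.mem_sup.1 hv
    obtain ⟨c, rfl⟩ := Submodule.mem_span_singleton.1 hy
    have hsum : Q (w + c • x) = Q w + c * c * Q x := by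
      rw [QuadraticMap.map_add Q w, QuadraticMap.polar_smul_right, (hx w hw).polar_eq_zero,
        QuadraticMap.map_smul, smul_zero, add_zero, smul_eq_mul]
    have hw0 : 0 ≤ Q w := hW.nonneg ⟨w, hw⟩
    rw [neg_apply, hsum]
    nlinarith [mul_nonneg (mul_self_nonneg c) hQx]
  have hle : sigNeg Q + _ ≤ _ := QuadraticForm.sigPos_add_finrank_le_of_nonpos hnonpos
  have hlt : Module.finrank 𝕜 W < Module.finrank 𝕜 ↥(W ⊔ 𝕜 ∙ x) :=
    Submodule.finrank_lt_finrank_of_lt (by simpa using hxW)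
  lia

end SignOfQuadraticForms

section Glue

variable {A B : Type*} [AddCommGroup A] [AddCommGroup B]

/-- The subgroup `ℤ·d + (L ⊕ M)`, which glues `L` and `M` along `d`. It generalizes the lattice
`Λ'` described by `memL`. -/
def glue (L : AddSubgroup A) (M : AddSubgroup B) (d : A × B) : AddSubgroup (A × B) :=
  AddSubgroup.zmultiples d ⊔ L.prod M

variable {L : AddSubgroup A} {M : AddSubgroup B}

theorem mem_glue {d x : A × B} :
    x ∈ glue L M d ↔ ∃ n : ℤ, x.1 - n • d.1 ∈ L ∧ x.2 - n • d.2 ∈ M := by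
  simp only [glue, AddSubgroup.mem_sup, AddSubgroup.mem_zmultiples_iff, exists_exists_eq_and]
  refine exists_congr fun n ↦ ⟨?_, fun h ↦ ⟨x - n • d, h, add_sub_cancel _ _⟩⟩
  rintro ⟨y, hy, rfl⟩
  simpa [AddSubgroup.mem_prod] using hy

theorem mem_or_sub_mem_of_mem_glue {d x : A × B} (hd : 2 • d ∈ L.prod M) (hx : x ∈ glue L M d) :
    x ∈ L.prod M ∨ x - d ∈ L.prod M := by
  obtain ⟨n, hn⟩ := mem_glue.1 hx
  replace hn : x - n • d ∈ L.prod M := hn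
  obtain ⟨k, rfl | rfl⟩ := Int.even_or_odd' n
  · left
    convert add_mem hn (zsmul_mem hd k) using 1
    module
  · right
    convert add_mem hn (zsmul_mem hd k) using 1
    module

variable [Module ℚ A] [Module ℚ B] {Q : QuadraticForm ℚ A} {R : QuadraticForm ℚ B}

theorem exists_eq_two_mul_of_sub_mem (hL : ∀ l ∈ L, ∃ k : ℤ, Q l = 4 * k) {d x : A}
    (hd : 2 • d ∈ L) (heven : ∃ m : ℤ, Q d = 2 * m) (hx : x - d ∈ L) :
    ∃ r : ℤ, Q x = 2 * r := by
  obtain ⟨m, hm⟩ := heven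
  obtain ⟨j, hj⟩ := hL (x - d) hx
  obtain ⟨k, hk⟩ := hL (x + d) (by convert add_mem hx hd using 1; module)
  have hparallelogram : Q (x + d) + Q (x - d) = 2 * (Q x + Q d) := by
    rw [sub_eq_add_neg, QuadraticMap.map_add Q x d, QuadraticMap.map_add Q x (-d),
      QuadraticMap.map_neg, QuadraticMap.polar_neg_right]
    ring
  refine ⟨j + k - m, ?_⟩
  push_cast
  linarith

theorem sub_mem_and_nonneg_of_root (hL : ∀ l ∈ L, ∃ k : ℤ, Q l = 4 * k)
    (hM : ∀ m ∈ M, ∃ k : ℤ, R m = 4 * k) (hR : (-R).PosDef) {d x : A × B}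
    (hd : 2 • d ∈ L.prod M) (hd₂ : d.2 ∉ M) (heven : ∃ m : ℤ, Q d.1 = 2 * m)
    (hx : x ∈ glue L M d) (hroot : Q x.1 + R x.2 = -2) :
    x.1 - d.1 ∈ L ∧ 0 ≤ Q x.1 := by
  rcases mem_or_sub_mem_of_mem_glue hd hx with ⟨hx₁, hx₂⟩ | ⟨hx₁, hx₂⟩
  · obtain ⟨j, hj⟩ := hL _ hx₁
    obtain ⟨k, hk⟩ := hM _ hx₂
    rw [hj, hk] at hroot
    norm_cast at hroot
    lia
  · obtain ⟨r, hr⟩ := exists_eq_two_mul_of_sub_mem hL hd.1 heven hx₁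
    have hx₂0 : x.2 ≠ 0 := fun h ↦ hd₂ (by simpa [h] using hx₂)
    have hneg : 0 < -R x.2 := hR x.2 hx₂0
    have hr_gt : (-1 : ℚ) < r := by linarith
    have hr_nonneg : 0 ≤ r := by exact_mod_cast hr_gt
    exact ⟨hx₁, by rw [hr]; positivity⟩

end Glue

section GramForm

variable {ι : Type*} [Fintype ι] [DecidableEq ι]

/-- The bilinear form on `ι → R` whose Gram matrix is the integer matrix `G`. The ring `R` is a
parameter so that a lattice and its rational, real and complex extensions share one definition. -/
def gramForm (R : Type*) [CommRing R] (G : Matrix ι ι ℤ) : LinearMap.BilinForm R (ι → R) :=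
  (G.map (Int.cast : ℤ → R)).toBilin'

/-- The quadratic form `x ↦ ⟨x,x⟩` of `gramForm R G`. -/
def gramNorm (R : Type*) [CommRing R] (G : Matrix ι ι ℤ) : QuadraticForm R (ι → R) :=
  (gramForm R G).toQuadraticMap

variable {R S : Type*} [CommRing R] [CommRing S] {G : Matrix ι ι ℤ}

theorem gramForm_apply (x y : ι → R) :
    gramForm R G x y = ∑ i, ∑ j, x i * (G i j : R) * y j := by
  simp [gramForm, Matrix.toBilin'_apply]

theorem gramNorm_apply (x : ι → R) : gramNorm R G x = gramForm R G x x := rfl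

theorem gramForm_isSymm (hG : G.IsSymm) : (gramForm R G).IsSymm :=
  Matrix.isSymm_toBilin'_iff_isSymm.2 (hG.map _)

theorem map_gramForm (f : R →+* S) (x y : ι → R) :
    f (gramForm R G x y) = gramForm S G (f ∘ x) (f ∘ y) := by
  simp [gramForm_apply]

/-- The lattice `ℤ^ι` inside `ℚ^ι`. -/
def intLattice (ι : Type*) : AddSubgroup (ι → ℚ) :=
  ((Int.castAddHom ℚ).compLeft ι).range

theorem mem_intLattice {ι : Type*} {x : ι → ℚ} : x ∈ intLattice ι ↔ ∀ i, ∃ n : ℤ, x i = n := by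
  rw [Classical.skolem]
  exact exists_congr fun n ↦ ⟨fun h i ↦ (congrFun h i).symm, fun h ↦ funext fun i ↦ (h i).symm⟩

theorem two_smul_mem_intLattice {ι : Type*} {x : ι → ℚ} :
    2 • x ∈ intLattice ι ↔ ∀ i, ∃ n : ℤ, x i = n / 2 := by
  refine mem_intLattice.trans (forall_congr' fun i ↦ exists_congr fun n ↦ ?_)
  rw [Pi.smul_apply, two_nsmul, ← mul_two, eq_div_iff two_ne_zero]

theorem exists_gramNorm_eq_four_mul (hG : ∀ v : ι → ℤ, 4 ∣ gramForm ℤ G v v) :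
    ∀ x ∈ intLattice ι, ∃ k : ℤ, gramNorm ℚ G x = 4 * k := by
  rintro _ ⟨v, rfl⟩
  obtain ⟨k, hk⟩ := hG v
  refine ⟨k, ?_⟩
  rw [gramNorm_apply]
  exact (map_gramForm (Int.castRingHom ℚ) v v).symm.trans (by simp [hk])

end GramForm

section Periods

variable {ι : Type*} [Fintype ι] [DecidableEq ι] {G : Matrix ι ι ℤ} {ω : ι → ℂ}

/-- The vectors `ω ∈ ℂ^ι` with `⟨ω,ω⟩ = 0` and `⟨ω,ω̄⟩ > 0`, the pairing being `gramForm ℂ G`. It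
generalizes the period domain `OmegaK`. -/
def periodDomain (G : Matrix ι ι ℤ) : Set (ι → ℂ) :=
  {ω | gramForm ℂ G ω ω = 0 ∧
    ∃ t : ℝ, 0 < t ∧ gramForm ℂ G ω (fun i ↦ starRingEnd ℂ (ω i)) = t}

/-- The map `z ↦ Re (z ω)`, whose image is the real plane spanned by `Re ω` and `Im ω`. -/
def periodPlane {ι : Type*} (ω : ι → ℂ) : ℂ →ₗ[ℝ] ι → ℝ :=
  LinearMap.pi fun i ↦ Complex.reLm ∘ₗ LinearMap.mulRight ℝ (ω i)

theorem ofReal_comp_periodPlane {ι : Type*} (ω : ι → ℂ) (z : ℂ) :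
    Complex.ofRealHom ∘ periodPlane ω z =
      (2⁻¹ : ℂ) • (z • ω + starRingEnd ℂ z • (starRingEnd ℂ ∘ ω)) := by
  ext i
  calc ((z * ω i).re : ℂ) = (z * ω i + starRingEnd ℂ (z * ω i)) / 2 := Complex.re_eq_add_conj _
    _ = 2⁻¹ * (z * ω i + starRingEnd ℂ z * starRingEnd ℂ (ω i)) := by rw [map_mul]; ring

theorem posDef_comp_periodPlane (hG : G.IsSymm) (hω : ω ∈ periodDomain G) :
    ((gramNorm ℝ G).comp (periodPlane ω)).PosDef := by
  obtain ⟨hωω, t, ht, hωt⟩ := hω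
  have hconj : gramForm ℂ G (starRingEnd ℂ ∘ ω) (starRingEnd ℂ ∘ ω) = 0 := by
    rw [← map_gramForm, hωω, map_zero]
  have hωt' : gramForm ℂ G (starRingEnd ℂ ∘ ω) ω = t := by
    rw [(gramForm_isSymm hG).eq]
    exact hωt
  replace hωt : gramForm ℂ G ω (starRingEnd ℂ ∘ ω) = t := hωt
  intro z hz
  have hnorm : gramNorm ℝ G (periodPlane ω z) = Complex.normSq z * t / 2 := by
    apply Complex.ofReal_injective
    calc ((gramNorm ℝ G (periodPlane ω z) : ℝ) : ℂ)
        = gramForm ℂ G (Complex.ofRealHom ∘ periodPlane ω z)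
            (Complex.ofRealHom ∘ periodPlane ω z) := map_gramForm Complex.ofRealHom _ _
      _ = z * starRingEnd ℂ z * t / 2 := by
        simp only [ofReal_comp_periodPlane, smul_add, map_add, map_smul, LinearMap.add_apply,
          LinearMap.smul_apply, hωω, smul_eq_mul, mul_zero, hωt, zero_add, hωt', hconj, add_zero]
        ring
      _ = (Complex.normSq z * t / 2 : ℝ) := by
        rw [Complex.mul_conj]
        push_cast
        rfl
  rw [QuadraticMap.comp_apply, hnorm]
  have := Complex.normSq_pos.2 hz
  positivity

theorem gramForm_periodPlane_eq_zero {x : ι → ℝ}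
    (hx : gramForm ℂ G ω (Complex.ofRealHom ∘ x) = 0) (z : ℂ) :
    gramForm ℝ G (periodPlane ω z) x = 0 := by
  have hconj : gramForm ℂ G (starRingEnd ℂ ∘ ω) (Complex.ofRealHom ∘ x) = 0 := by
    have hreal : Complex.ofRealHom ∘ x = starRingEnd ℂ ∘ Complex.ofRealHom ∘ x := by ext; simp
    rw [hreal, ← map_gramForm, hx, map_zero]
  apply Complex.ofReal_injective
  refine (map_gramForm Complex.ofRealHom _ _).trans ?_
  simp [ofReal_comp_periodPlane, hx, hconj]

theorem gramNorm_neg_of_orthogonal_period (hG : G.IsSymm)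
    (hsig : Fintype.card ι ≤ sigNeg (gramNorm ℝ G) + 2) (hω : ω ∈ periodDomain G) {x : ι → ℝ}
    (hx : gramForm ℂ G ω (Complex.ofRealHom ∘ x) = 0) (hx0 : x ≠ 0) : gramNorm ℝ G x < 0 := by
  have hpos := posDef_comp_periodPlane hG hω
  refine neg_of_isOrtho_of_posDef (posDef_restrict_range_of_posDef_comp hpos) ?_ ?_ hx0
  · rwa [finrank_range_of_posDef_comp hpos, Complex.finrank_real_complex, Module.finrank_pi]
  · rintro _ ⟨z, rfl⟩
    exact (LinearMap.BilinForm.toQuadraticMap_isOrtho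
      (LinearMap.BilinForm.isSymm_iff.1 (gramForm_isSymm hG))).2
      (gramForm_periodPlane_eq_zero hx z)

end Periods

theorem statement8_general {ι κ : Type*} [Fintype ι] [DecidableEq ι] [Fintype κ] [DecidableEq κ]
    {G : Matrix ι ι ℤ} (hG : G.IsSymm) (hG4 : ∀ v : ι → ℤ, 4 ∣ gramForm ℤ G v v)
    (hsig : Fintype.card ι ≤ sigNeg (gramNorm ℝ G) + 2)
    {H : Matrix κ κ ℤ} (hH4 : ∀ v : κ → ℤ, 4 ∣ gramForm ℤ H v v) (hH : (-gramNorm ℚ H).PosDef)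
    {d : (ι → ℚ) × (κ → ℚ)} (hd : 2 • d ∈ (intLattice ι).prod (intLattice κ))
    (hd₁ : d.1 ∉ intLattice ι) (hd₂ : d.2 ∉ intLattice κ)
    (heven : ∃ m : ℤ, gramNorm ℚ G d.1 = 2 * m)
    {δ : (ι → ℚ) × (κ → ℚ)} (hδ : δ ∈ glue (intLattice ι) (intLattice κ) d)
    (hroot : gramNorm ℚ G δ.1 + gramNorm ℚ H δ.2 = -2)
    {ω : ι → ℂ} (hω : ω ∈ periodDomain G) :
    gramForm ℂ G ω (fun i ↦ (δ.1 i : ℂ)) ≠ 0 := by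
  intro horth
  obtain ⟨hcoset, hnonneg⟩ := sub_mem_and_nonneg_of_root (exists_gramNorm_eq_four_mul hG4)
    (exists_gramNorm_eq_four_mul hH4) hH hd hd₂ heven hδ hroot
  have hδ0 : δ.1 ≠ 0 := fun h ↦ hd₁ (by simpa [h] using hcoset)
  have hneg : gramNorm ℝ G (Rat.castHom ℝ ∘ δ.1) < 0 := by
    refine gramNorm_neg_of_orthogonal_period hG hsig hω ?_ fun h ↦ hδ0 ?_
    · convert horth using 2
      ext i
      simp
    · ext i
      simpa using congrFun h i
  rw [gramNorm_apply, ← map_gramForm] at hneg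
  exact hnonneg.not_gt (Rat.cast_lt_zero.1 hneg)

section SpecificLattices

/-- The Gram matrix of `U(2) ⊕ U(2)`. -/
def gramK : Matrix (Fin 4) (Fin 4) ℤ :=
  !![0, 2, 0, 0;
     2, 0, 0, 0;
     0, 0, 0, 2;
     0, 0, 2, 0]

theorem gramForm_gramK_apply {R : Type*} [CommRing R] (x y : Fin 4 → R) :
    gramForm R gramK x y = 2 * (x 0 * y 1 + x 1 * y 0) + 2 * (x 2 * y 3 + x 3 * y 2) := by
  simp only [gramForm_apply, gramK, Matrix.of_apply, Matrix.cons_val, Fin.sum_univ_four,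
    Int.cast_ofNat, Int.cast_zero]
  ring

theorem four_dvd_gramForm_gramK (v : Fin 4 → ℤ) : 4 ∣ gramForm ℤ gramK v v :=
  ⟨v 0 * v 1 + v 2 * v 3, by rw [gramForm_gramK_apply]; ring⟩

theorem two_le_sigNeg_gramK : 2 ≤ sigNeg (gramNorm ℝ gramK) := by
  let f : (Fin 2 → ℝ) →ₗ[ℝ] Fin 4 → ℝ := Matrix.mulVecLin !![1, 0; -1, 0; 0, 1; 0, -1]
  have hf : ((-gramNorm ℝ gramK).comp f).PosDef := by
    refine posDef_of_eq_sum_sq (c := fun _ ↦ 4) (u := id) (by simp) (by simp) fun v ↦ ?_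
    simp only [f, QuadraticMap.comp_apply, Matrix.mulVecLin_apply, Matrix.cons_mulVec, dotProduct,
      neg_apply, gramNorm_apply, gramForm_gramK_apply, Matrix.cons_val, Fin.sum_univ_two, id_eq]
    ring
  have hle := le_sigNeg_of_negDef _ (posDef_restrict_range_of_posDef_comp hf)
  rwa [finrank_range_of_posDef_comp hf, Module.finrank_fin_fun] at hle

theorem gramForm_E₈_self {R : Type*} [CommRing R] (x : Fin 8 → R) :
    gramForm R CartanMatrix.E₈ x x =
      2 * (x 0 ^ 2 + x 1 ^ 2 + x 2 ^ 2 + x 3 ^ 2 + x 4 ^ 2 + x 5 ^ 2 + x 6 ^ 2 + x 7 ^ 2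
        - x 0 * x 2 - x 1 * x 3 - x 2 * x 3 - x 3 * x 4 - x 4 * x 5 - x 5 * x 6 - x 6 * x 7) := by
  simp only [gramForm_apply, CartanMatrix.E₈, Matrix.of_apply, Matrix.cons_val,
    Fin.sum_univ_eight, Int.cast_ofNat, Int.cast_zero, Int.cast_neg, Int.cast_one]
  ring

theorem posDef_gramNorm_E₈ {𝕜 : Type*} [Field 𝕜] [LinearOrder 𝕜] [IsStrictOrderedRing 𝕜] :
    (gramNorm 𝕜 CartanMatrix.E₈).PosDef := by
  -- The `LDLᵀ` decomposition of the Cartan matrix: `c` lists the pivots, with product `det E₈ = 1`.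
  refine posDef_of_eq_sum_sq (c := ![2, 2, 3 / 2, 5 / 6, 4 / 5, 3 / 4, 2 / 3, 1 / 2])
    (u := fun x ↦ ![x 0 - x 2 / 2, x 1 - x 3 / 2, x 2 - 2 / 3 * x 3, x 3 - 6 / 5 * x 4,
      x 4 - 5 / 4 * x 5, x 5 - 4 / 3 * x 6, x 6 - 3 / 2 * x 7, x 7])
    (by simp [Fin.forall_fin_succ]) (fun x hx ↦ ?_) fun x ↦ ?_
  · simp only [funext_iff, Fin.forall_fin_succ, Pi.zero_apply, Matrix.cons_val_zero,
      Matrix.cons_val_succ, Matrix.cons_val_fin_one] at hx ⊢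
    grind
  · simp only [gramNorm_apply, gramForm_E₈_self, Fin.sum_univ_eight, Matrix.cons_val]
    ring

/-- The Gram matrix of `E₈(2)`, with the negative definite sign convention. -/
def gramE : Matrix (Fin 8) (Fin 8) ℤ :=
  (-2 : ℤ) • CartanMatrix.E₈

theorem gramForm_gramE_apply {R : Type*} [CommRing R] (x y : Fin 8 → R) :
    gramForm R gramE x y = -2 * gramForm R CartanMatrix.E₈ x y := by
  simp only [gramForm_apply, gramE, Matrix.smul_apply, smul_eq_mul, Finset.mul_sum]
  refine Finset.sum_congr rfl fun i _ ↦ Finset.sum_congr rfl fun j _ ↦ ?_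
  push_cast
  ring

theorem four_dvd_gramForm_gramE (v : Fin 8 → ℤ) : 4 ∣ gramForm ℤ gramE v v := by
  obtain ⟨k, hk⟩ : 2 ∣ gramForm ℤ CartanMatrix.E₈ v v := ⟨_, gramForm_E₈_self v⟩
  exact ⟨-k, by rw [gramForm_gramE_apply, hk]; ring⟩

theorem negDef_gramNorm_gramE {𝕜 : Type*} [Field 𝕜] [LinearOrder 𝕜] [IsStrictOrderedRing 𝕜] :
    (-gramNorm 𝕜 gramE).PosDef := by
  intro x hx
  have hpos : 0 < gramForm 𝕜 CartanMatrix.E₈ x x := posDef_gramNorm_E₈ x hx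
  rw [neg_apply, gramNorm_apply, gramForm_gramE_apply]
  linarith

theorem bK_eq_gramForm (x y : Fin 4 → ℚ) : bK x y = gramForm ℚ gramK x y :=
  (gramForm_gramK_apply x y).symm

theorem bKC_eq_gramForm (x y : Fin 4 → ℂ) : bKC x y = gramForm ℂ gramK x y :=
  (gramForm_gramK_apply x y).symm

theorem bE_eq_gramForm (x y : Fin 8 → ℚ) : bE x y = gramForm ℚ gramE x y :=
  (gramForm_apply x y).symm

theorem memL_iff_mem_glue {d₁ : Fin 4 → ℚ} {d₂ : Fin 8 → ℚ} {x : V} :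
    memL d₁ d₂ x ↔ x ∈ glue (intLattice (Fin 4)) (intLattice (Fin 8)) (d₁, d₂) := by
  simp only [mem_glue, mem_intLattice, ← Int.cast_smul_eq_zsmul ℚ]
  rfl

theorem OmegaK_iff_mem_periodDomain {ω : Fin 4 → ℂ} : OmegaK ω ↔ ω ∈ periodDomain gramK := by
  simp only [OmegaK, periodDomain, bKC_eq_gramForm, Set.mem_ofPred_eq]

end SpecificLattices

theorem statement8 (d₁ : Fin 4 → ℚ) (d₂ : Fin 8 → ℚ)
    (hd₁ : isHalf4 d₁) (hd₁' : ¬ isInt4 d₁)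
    (hd₂ : isHalf8 d₂) (hd₂' : ¬ isInt8 d₂)
    (heven : ∃ k : ℤ, bK d₁ d₁ + bE d₂ d₂ = 2 * k)
    (heven₁ : ∃ m : ℤ, bK d₁ d₁ = 2 * m) :
    ∀ δ : V, memL d₁ d₂ δ → bV δ δ = -2 →
      ∀ ω : Fin 4 → ℂ, OmegaK ω → bKC ω (qc δ.1) ≠ 0 := by
  intro δ hδ hroot ω hω
  simp only [bV, bK_eq_gramForm, bE_eq_gramForm, bKC_eq_gramForm] at heven₁ hroot ⊢
  exact statement8_general (d := (d₁, d₂)) (by decide) four_dvd_gramForm_gramK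
    (Nat.add_le_add_right two_le_sigNeg_gramK 2) four_dvd_gramForm_gramE negDef_gramNorm_gramE
    ⟨two_smul_mem_intLattice.2 hd₁, two_smul_mem_intLattice.2 hd₂⟩ (mt mem_intLattice.1 hd₁')
    (mt mem_intLattice.1 hd₂') heven₁ (memL_iff_mem_glue.1 hδ) hroot
    (OmegaK_iff_mem_periodDomain.1 hω)

end Stmt8
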